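/- Let (M_t)_{t∈ℝ} be a family of complete metric spaces and let (μ_{st})_{s,t∈ℝ} be a local approximate flow with data ε > 0, exponents (a_i, b_i), constants C_i, and Lipschitz-control function g, and set K := 2^{1+ε} (Σ_{i=1}^{n} C_i) ζ(1+ε). Then for any pair (I, I') of subdivisions of the interval between s and t, d_{st}(μ^I_{st}, μ^{I'}_{st}) ≤ K · g(|t−s|) · ( g(mesh(I)) · mesh(I)^{ε} + g(mesh(I')) · mesh(I')^{ε} ) · |t−s|. -/

import Mathlib

/-!
Write `L s l t` for the composition of the maps `μ` along the chain `s, l₁, …, l_k, t` and `V s l t`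
for the total variation of that chain. A chain is monotone exactly when `V s l t ≤ |t - s|`, a
condition that does not see the direction and is inherited by pieces of the chain.

The estimate is the sewing argument. In a monotone chain with `k + 1` interior points, the double
gaps `|u - x| + |y - u|` (for consecutive `x, u, y`) add up to at most `2 |t - s|`, so one of them
is at most `δ = 2 |t - s| / (k + 1)`. Deleting that `u` changes the composition by at most
`g |t - s| * (∑ C i) * δ ^ (1 + ε)`, by the three-point estimate and the Lipschitz bound on the
part of the composition to the left of `u` (`exists_removal`). Deleting all interior points one by
one gives a partial sum of `ζ(1 + ε)`, hence
`d (μ s t) (L s l t) ≤ K * g |t - s| * |t - s| ^ (1 + ε)` (`edist_single_le`).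

If a monotone chain `J` refines a chain `l`, replacing the steps of `l` one at a time by the
corresponding pieces of `J` gives
`d (L s l t) (L s J t) ≤ K * g |t - s| * g (mesh l) * (mesh l) ^ ε * |t - s|` (`edist_refine_le`).
Here the part on the left of the replaced step is the composition along a single
monotone chain, a piece of `J`, so that its Lipschitz constant is at most
`g |t - s|`, whatever the number of steps. The theorem follows by comparing both subdivisions with
the sorted union of their points.
-/

open scoped ENNReal

noncomputable section

/-- Extended uniform distance `sup_x edist (u x) (v x)` between two maps. -/
def unifDist {α β : Type*} [PseudoEMetricSpace β] (u v : α → β) : ℝ≥0∞ :=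
  ⨆ x, edist (u x) (v x)

/-- `h` is Lipschitz with (real) constant `K`:
`edist (h y) (h y') ≤ K * edist y y'` for all `y, y'`. -/
def LipWith {α β : Type*} [PseudoEMetricSpace α] [PseudoEMetricSpace β]
    (K : ℝ) (h : α → β) : Prop :=
  ∀ y y', edist (h y) (h y') ≤ ENNReal.ofReal K * edist y y'

/-- The composition `μ (x 0) (x 1) ∘ μ (x 1) (x 2) ∘ ⋯ ∘ μ (x (k-1)) (x k)`
of the maps `μ` along the finite chain of points `x 0, …, x k`. -/
def compAlong {P : Type*} {M : P → Type*} (μ : ∀ x y : P, M y → M x) (x : ℕ → P) :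
    ∀ k : ℕ, M (x k) → M (x 0)
  | 0 => id
  | k+1 => fun m => compAlong μ x k (μ (x k) (x (k+1)) m)

/-- Transport a map `M a → M b` along equalities of base points. -/
def castM {P : Type*} (M : P → Type*) {a b c d : P} (h1 : a = c) (h2 : b = d)
    (f : M a → M b) : M c → M d :=
  fun m => cast (congrArg M h2) (f (cast (congrArg M h1.symm) m))

/-- A subdivision `(t_0, …, t_k)` of the interval between `s` and `t`: a finite sequence
with `t_0 = s`, `t_k = t`, arranged in increasing order if `s < t` and decreasing order
if `s > t`. -/
structure Subdivision (s t : ℝ) where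
  k : ℕ
  pt : ℕ → ℝ
  k_pos : 0 < k
  first : pt 0 = s
  last : pt k = t
  mono_of_le : s ≤ t → ∀ i j, i ≤ j → j ≤ k → pt i ≤ pt j
  anti_of_ge : t ≤ s → ∀ i j, i ≤ j → j ≤ k → pt j ≤ pt i

/-- The mesh `max_{1 ≤ j ≤ k} |t_j - t_{j-1}|` of a subdivision. -/
def Subdivision.mesh {s t : ℝ} (I : Subdivision s t) : ℝ :=
  ⨆ j : Fin I.k, |I.pt (j.1 + 1) - I.pt j.1|

/-- The value `ζ(x) = Σ_{ℓ ≥ 1} ℓ^{-x}` of the Riemann zeta function at a real `x`. -/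
def zetaR (x : ℝ) : ℝ := ∑' m : ℕ, ((m : ℝ) + 1) ^ (-x)

/-- A local approximate flow on a family `(M t)` of complete metric spaces, with data
`ε > 0`, exponents `a i, b i > 0` with `a i + b i = 1 + ε`, constants `C i > 0`, and
Lipschitz-control functions `f` and `g`. -/
structure IsLocalApproxFlow {M : ℝ → Type*} [∀ t, MetricSpace (M t)]
    (μ : ∀ s t : ℝ, M t → M s) (ε : ℝ) (n : ℕ) (a b C : Fin n → ℝ)
    (f g : ℝ → ℝ) : Prop where
  continuous : ∀ s t, Continuous (μ s t)
  id_eq : ∀ t, μ t t = id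
  eps_pos : 0 < ε
  n_pos : 0 < n
  a_pos : ∀ i, 0 < a i
  b_pos : ∀ i, 0 < b i
  ab_eq : ∀ i, a i + b i = 1 + ε
  C_pos : ∀ i, 0 < C i
  f_cont : Continuous f
  f_nonneg : ∀ x, 0 ≤ f x
  f_zero : f 0 = 0
  lip : ∀ s t, LipWith (1 + f (t - s)) (μ s t)
  three_point : ∀ s t u, unifDist (μ s t) (fun x => μ s u (μ u t x)) ≤
    ENNReal.ofReal (∑ i, C i * |t - u| ^ a i * |u - s| ^ b i)
  g_mono : MonotoneOn g (Set.Ici 0)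
  g_cont : ContinuousOn g (Set.Ici 0)
  g_ge_one : ∀ x ∈ Set.Ici (0 : ℝ), 1 ≤ g x
  lip_chain : ∀ (k : ℕ) (u : ℕ → ℝ),
    LipWith (g (∑ j ∈ Finset.range k, |u (j + 1) - u j|)) (compAlong μ u k)

/-- The composition `μ^I_{st} = μ_{t_0 t_1} ∘ ⋯ ∘ μ_{t_{k-1} t_k}` along a subdivision `I`
of the interval between `s` and `t`, viewed as a map `M t → M s`. -/
def Subdivision.comp {M : ℝ → Type*} {s t : ℝ} (I : Subdivision s t)
    (μ : ∀ s t : ℝ, M t → M s) : M t → M s :=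
  castM M I.last I.first (compAlong μ I.pt I.k)

/-! ### Chains with given end points -/

/-- The composition `μ s l₁ ∘ μ l₁ l₂ ∘ ⋯ ∘ μ l_k t` along the chain with end points `s`, `t` and
interior points `l`. Keeping the end points apart from the list avoids casts between fibres. -/
def chainComp {M : ℝ → Type*} (μ : ∀ s t : ℝ, M t → M s) : ∀ (s : ℝ) (_ : List ℝ) (t : ℝ), M t → M s
  | s, [], t => μ s t
  | s, u :: l, t => fun x => μ s u (chainComp μ u l t x)

/-- The total variation of the chain `s, l₁, …, l_k, t`. -/
def chainVar : ℝ → List ℝ → ℝ → ℝ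
  | s, [], t => |t - s|
  | s, u :: l, t => |u - s| + chainVar u l t

/-- All consecutive gaps of the chain `s, l₁, …, l_k, t` are at most `m`. -/
def chainGap (m : ℝ) : ℝ → List ℝ → ℝ → Prop
  | s, [], t => |t - s| ≤ m
  | s, u :: l, t => |u - s| ≤ m ∧ chainGap m u l t

/-- The sum over the interior points `u` of the chain, with neighbours `x` and `y`, of
`|u - x| + |y - u|`. -/
def chainDouble : ℝ → List ℝ → ℝ → ℝ
  | _, [], _ => 0
  | s, u :: l, t => |u - s| + |l.headD t - u| + chainDouble u l t

lemma chainComp_append {M : ℝ → Type*} (μ : ∀ s t : ℝ, M t → M s) (l₁ l₂ : List ℝ) (s u t : ℝ)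
    (x : M t) : chainComp μ s (l₁ ++ u :: l₂) t x = chainComp μ s l₁ u (chainComp μ u l₂ t x) := by
  induction l₁ generalizing s with
  | nil => rfl
  | cons v l ih => simp only [List.cons_append, chainComp, ih]

lemma chainVar_append (l₁ l₂ : List ℝ) (s u t : ℝ) :
    chainVar s (l₁ ++ u :: l₂) t = chainVar s l₁ u + chainVar u l₂ t := by
  induction l₁ generalizing s with
  | nil => rfl
  | cons v l ih => simp only [List.cons_append, chainVar, ih, add_assoc]

lemma chainGap_append {m : ℝ} (l₁ l₂ : List ℝ) (s u t : ℝ) :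
    chainGap m s (l₁ ++ u :: l₂) t ↔ chainGap m s l₁ u ∧ chainGap m u l₂ t := by
  induction l₁ generalizing s with
  | nil => rfl
  | cons v l ih => simp only [List.cons_append, chainGap, ih, and_assoc]

lemma abs_sub_le_chainVar (s : ℝ) (l : List ℝ) (t : ℝ) : |t - s| ≤ chainVar s l t := by
  induction l generalizing s with
  | nil => exact le_rfl
  | cons u l ih =>
    have h1 := ih u
    have h2 := abs_sub_le t u s
    simp only [chainVar]
    linarith

lemma chainDouble_add_le (s : ℝ) (l : List ℝ) (t : ℝ) :
    chainDouble s l t + |l.headD t - s| ≤ 2 * chainVar s l t := by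
  induction l generalizing s with
  | nil =>
    simp only [chainDouble, chainVar, List.headD_nil]
    linarith [abs_nonneg (t - s)]
  | cons u l ih =>
    have h1 := ih u
    simp only [chainDouble, chainVar, List.headD_cons]
    linarith

lemma chainComp_map_range {M : ℝ → Type*} (μ : ∀ s t : ℝ, M t → M s) (x : ℕ → ℝ) (k : ℕ) :
    chainComp μ (x 0) ((List.range' 1 k).map x) (x (k + 1)) = compAlong μ x (k + 1) := by
  induction k with
  | zero => rfl
  | succ k ih =>
    funext m
    rw [List.range'_concat, List.map_append, List.map_singleton, chainComp_append]
    rw [one_mul, add_comm 1 k, ih]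
    rfl

lemma chainVar_map_range (x : ℕ → ℝ) (k : ℕ) :
    chainVar (x 0) ((List.range' 1 k).map x) (x (k + 1)) =
      ∑ j ∈ Finset.range (k + 1), |x (j + 1) - x j| := by
  induction k with
  | zero => simp [chainVar]
  | succ k ih =>
    rw [List.range'_concat, List.map_append, List.map_singleton, chainVar_append,
      Finset.sum_range_succ]
    simp only [one_mul, add_comm 1 k, ih, chainVar]

lemma chainGap_map_range {m : ℝ} (x : ℕ → ℝ) (k : ℕ) (hx : ∀ j < k + 1, |x (j + 1) - x j| ≤ m) :
    chainGap m (x 0) ((List.range' 1 k).map x) (x (k + 1)) := by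
  induction k with
  | zero => simpa [chainGap] using hx 0 (by simp)
  | succ k ih =>
    rw [List.range'_concat, List.map_append, List.map_singleton, chainGap_append]
    simp only [one_mul, add_comm 1 k]
    exact ⟨ih fun j hj => hx j (by omega), hx (k + 1) (by omega)⟩

/-- A chain that is monotone for one of the orders `≤`, `≥` has variation `|t - s|`; the
hypothesis `hr` is what the two orders have in common. -/
lemma chainVar_le_of_pairwise (r : ℝ → ℝ → Prop)
    (hr : ∀ x u y, r x u → r u y → |u - x| + |y - u| ≤ |y - x|) (s t : ℝ) (l : List ℝ)
    (hl : l.Pairwise r) (hs : ∀ u ∈ l, r s u) (ht : ∀ u ∈ l, r u t) :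
    chainVar s l t ≤ |t - s| := by
  induction l generalizing s with
  | nil => exact le_rfl
  | cons u l ih =>
    rw [List.pairwise_cons] at hl
    have h1 := ih u hl.2 hl.1 fun v hv => ht v (List.mem_cons_of_mem _ hv)
    have h2 := hr s u t (hs u List.mem_cons_self) (ht u List.mem_cons_self)
    simp only [chainVar]
    linarith

/-! ### Subdivisions as chains, and common refinements -/

/-- The interior points `t_1, …, t_{k-1}` of a subdivision. -/
def Subdivision.interior {s t : ℝ} (I : Subdivision s t) : List ℝ :=
  (List.range' 1 (I.k - 1)).map I.pt

lemma Subdivision.comp_eq {M : ℝ → Type*} (μ : ∀ s t : ℝ, M t → M s) {s t : ℝ}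
    (I : Subdivision s t) : I.comp μ = chainComp μ s I.interior t := by
  obtain ⟨k, pt, k_pos, rfl, rfl, -, -⟩ := I
  obtain ⟨k, rfl⟩ : ∃ j, k = j + 1 := ⟨k - 1, by omega⟩
  exact (chainComp_map_range μ pt k).symm

lemma Subdivision.chainGap_mesh {s t : ℝ} (I : Subdivision s t) :
    chainGap I.mesh s I.interior t := by
  have hm : ∀ j < I.k, |I.pt (j + 1) - I.pt j| ≤ I.mesh := fun j hj =>
    le_ciSup (f := fun j : Fin I.k => |I.pt (j.1 + 1) - I.pt j.1|)
      (Set.finite_range _).bddAbove ⟨j, hj⟩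
  have hk := I.k_pos
  have h := chainGap_map_range I.pt (I.k - 1) fun j hj => hm j (by omega)
  rwa [Nat.sub_add_cancel hk, I.first, I.last] at h

lemma Subdivision.mesh_nonneg {s t : ℝ} (I : Subdivision s t) : 0 ≤ I.mesh :=
  Real.iSup_nonneg fun _ => abs_nonneg _

/-- The sorted union of the interior points of two subdivisions is a monotone common refinement. -/
lemma Subdivision.exists_refinement {s t : ℝ} (I I' : Subdivision s t) :
    ∃ J : List ℝ, I.interior.Sublist J ∧ I'.interior.Sublist J ∧ chainVar s J t ≤ |t - s| := by
  have key : ∀ (r : ℝ → ℝ → Prop) [DecidableRel r] [Std.Total r] [IsTrans ℝ r],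
      (∀ x u y, r x u → r u y → |u - x| + |y - u| ≤ |y - x|) →
      (∀ I : Subdivision s t, ∀ i j, i ≤ j → j ≤ I.k → r (I.pt i) (I.pt j)) →
      ∃ J : List ℝ, I.interior.Sublist J ∧ I'.interior.Sublist J ∧ chainVar s J t ≤ |t - s| := by
    intro r _ _ _ hr hI
    have hsort : ∀ I : Subdivision s t, I.interior.Pairwise r := by
      intro I
      rw [Subdivision.interior, List.pairwise_map]
      refine List.Pairwise.imp_of_mem ?_ (List.pairwise_lt_range' (s := 1) (n := I.k - 1))
      intro i j _ hj hij
      rw [List.mem_range'_1] at hj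
      exact hI I i j hij.le (by omega)
    have hmem : ∀ I : Subdivision s t, ∀ u ∈ I.interior, r s u ∧ r u t := by
      intro I u hu
      obtain ⟨i, hi, rfl⟩ := List.mem_map.1 hu
      rw [List.mem_range'_1] at hi
      have h1 := hI I 0 i (by omega) (by omega)
      have h2 := hI I i I.k (by omega) le_rfl
      rw [I.first] at h1
      rw [I.last] at h2
      exact ⟨h1, h2⟩
    have hmem' : ∀ u ∈ (I.interior ++ I'.interior).insertionSort r, r s u ∧ r u t := by
      intro u hu
      rw [List.mem_insertionSort, List.mem_append] at hu
      exact hu.elim (hmem I u) (hmem I' u)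
    exact ⟨(I.interior ++ I'.interior).insertionSort r,
      List.sublist_insertionSort (hsort I) (List.sublist_append_left _ _),
      List.sublist_insertionSort (hsort I') (List.sublist_append_right _ _),
      chainVar_le_of_pairwise r hr s t _ (List.pairwise_insertionSort r _)
        (fun u hu => (hmem' u hu).1) (fun u hu => (hmem' u hu).2)⟩
  rcases le_total s t with hst | hst
  · refine key (· ≤ ·) ?_ fun I => I.mono_of_le hst
    intro x u y h1 h2
    rw [abs_of_nonneg (by linarith), abs_of_nonneg (by linarith), abs_of_nonneg (by linarith)]
    linarith
  · refine key (· ≥ ·) ?_ fun I => I.anti_of_ge hst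
    intro x u y h1 h2
    rw [abs_of_nonpos (by linarith), abs_of_nonpos (by linarith), abs_of_nonpos (by linarith)]
    linarith

/-! ### Estimates for a local approximate flow -/

section Flow

variable {M : ℝ → Type*} [∀ t, MetricSpace (M t)] {μ : ∀ s t : ℝ, M t → M s} {ε : ℝ} {n : ℕ}
  {a b C : Fin n → ℝ} {f g : ℝ → ℝ}

lemma lipWith_chainComp (h : IsLocalApproxFlow μ ε n a b C f g) (s : ℝ) (l : List ℝ) (t R : ℝ)
    (hR : chainVar s l t ≤ R) : LipWith (g R) (chainComp μ s l t) := by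
  have key : ∀ (x : ℕ → ℝ) (s : ℝ) (l : List ℝ) (t : ℝ) (k : ℕ), x 0 = s → x (k + 1) = t →
      (List.range' 1 k).map x = l → LipWith (g (chainVar s l t)) (chainComp μ s l t) := by
    rintro x _ _ _ k rfl rfl rfl
    rw [chainComp_map_range, chainVar_map_range]
    exact h.lip_chain _ _
  have h1 : LipWith (g (chainVar s l t)) (chainComp μ s l t) := by
    refine key (fun j => (s :: (l ++ [t])).getD j t) s l t l.length rfl ?_ ?_
    · simp
    · refine List.ext_getElem (by simp) fun i h1 h2 => ?_
      simp [add_comm 1 i, List.getElem?_append_left h2, List.getElem?_eq_getElem h2]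
  have h0 : 0 ≤ chainVar s l t := (abs_nonneg _).trans (abs_sub_le_chainVar s l t)
  intro y y'
  refine (h1 y y').trans ?_
  gcongr
  exact h.g_mono h0 (h0.trans hR) hR

lemma edist_three_point_le (h : IsLocalApproxFlow μ ε n a b C f g) (s u t δ : ℝ)
    (hδ : |u - s| + |t - u| ≤ δ) (x : M t) :
    edist (μ s t x) (μ s u (μ u t x)) ≤ ENNReal.ofReal ((∑ i, C i) * δ ^ (1 + ε)) := by
  have h1 : edist (μ s t x) (μ s u (μ u t x)) ≤ unifDist (μ s t) (fun x => μ s u (μ u t x)) :=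
    le_iSup (fun x => edist (μ s t x) (μ s u (μ u t x))) x
  refine h1.trans ((h.three_point s t u).trans (ENNReal.ofReal_le_ofReal ?_))
  rw [Finset.sum_mul]
  refine Finset.sum_le_sum fun i _ => ?_
  have hu := abs_nonneg (u - s)
  have ht := abs_nonneg (t - u)
  have ha := h.a_pos i
  have hb := h.b_pos i
  have hC := h.C_pos i
  have hδ0 : 0 ≤ δ := by linarith
  rw [← h.ab_eq i, Real.rpow_add_of_nonneg hδ0 ha.le hb.le, mul_assoc]
  gcongr <;> linarith

/-- If the double gaps of a chain with at least one interior point have average at most `δ`, then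
some interior point can be deleted at cost `g R * (∑ C i) * δ ^ (1 + ε)`. The statement carries a
chain `s₀, p, s` on the left, whose length enters only through `R`, to make the induction run. -/
lemma exists_removal (h : IsLocalApproxFlow μ ε n a b C f g) (t δ : ℝ) (J : List ℝ) :
    ∀ s : ℝ, J ≠ [] → chainDouble s J t ≤ δ * J.length →
    ∃ J' : List ℝ, J.length = J'.length + 1 ∧ chainVar s J' t ≤ chainVar s J t ∧
      ∀ (s₀ : ℝ) (p : List ℝ) (R : ℝ), chainVar s₀ p s + chainVar s J t ≤ R → ∀ x : M t,
        edist (chainComp μ s₀ p s (chainComp μ s J' t x))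
          (chainComp μ s₀ p s (chainComp μ s J t x)) ≤
        ENNReal.ofReal (g R * ((∑ i, C i) * δ ^ (1 + ε))) := by
  induction J with
  | nil => exact fun s h0 => absurd rfl h0
  | cons u l ih =>
    intro s _ hd
    have hgR : ∀ (s₀ : ℝ) (p : List ℝ) (R : ℝ), chainVar s₀ p s + chainVar s (u :: l) t ≤ R →
        chainVar s₀ p s ≤ R ∧ 0 ≤ g R := by
      intro s₀ p R hR
      have h1 := (abs_nonneg _).trans (abs_sub_le_chainVar s₀ p s)
      have h2 := (abs_nonneg _).trans (abs_sub_le_chainVar s (u :: l) t)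
      exact ⟨by linarith, zero_le_one.trans (h.g_ge_one R (Set.mem_Ici.2 (by linarith)))⟩
    by_cases hδ : |u - s| + |l.headD t - u| ≤ δ
    · refine ⟨l, rfl, ?_, ?_⟩
      · cases l with
        | nil => simpa [chainVar] using (abs_sub_le t u s).trans_eq (add_comm _ _)
        | cons v l =>
          simp only [chainVar]
          linarith [abs_sub_le v u s]
      · intro s₀ p R hR x
        obtain ⟨hpR, hg⟩ := hgR s₀ p R hR
        refine (lipWith_chainComp h s₀ p s R hpR _ _).trans ?_
        rw [ENNReal.ofReal_mul hg]
        gcongr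
        cases l with
        | nil => exact edist_three_point_le h s u t δ hδ x
        | cons v l => exact edist_three_point_le h s u v δ hδ _
    · have hl : l ≠ [] := by
        rintro rfl
        simp [chainDouble] at hd hδ
        linarith
      have hd' : chainDouble u l t ≤ δ * l.length := by
        simp only [chainDouble, List.length_cons, Nat.cast_add, Nat.cast_one] at hd
        linarith
      obtain ⟨J', h1, h2, h3⟩ := ih u hl hd'
      refine ⟨u :: J', by simp [h1], by simpa [chainVar] using h2, ?_⟩
      intro s₀ p R hR x
      have := h3 s₀ (p ++ [s]) R
        (by rw [chainVar_append]; simp only [chainVar] at hR ⊢; linarith) x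
      simpa only [chainComp_append, chainComp] using this

lemma edist_single_le_sum (h : IsLocalApproxFlow μ ε n a b C f g) (s t : ℝ) (k : ℕ) :
    ∀ J : List ℝ, J.length = k → chainVar s J t ≤ |t - s| → ∀ x : M t,
    edist (μ s t x) (chainComp μ s J t x) ≤
      ENNReal.ofReal (2 ^ (1 + ε) * (∑ i, C i) *
        (∑ j ∈ Finset.range k, ((j : ℝ) + 1) ^ (-(1 + ε))) * g |t - s| * |t - s| ^ (1 + ε)) := by
  have hC : 0 ≤ ∑ i, C i := Finset.sum_nonneg fun i _ => (h.C_pos i).le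
  have hg : 0 ≤ g |t - s| := zero_le_one.trans (h.g_ge_one _ (abs_nonneg (t - s)))
  have hts := abs_nonneg (t - s)
  induction k with
  | zero =>
    intro J hJ _ x
    rw [List.length_eq_zero_iff.1 hJ]
    simp [chainComp]
  | succ k ih =>
    intro J hJ hV x
    have hk : (0 : ℝ) < k + 1 := by positivity
    obtain ⟨J', h1, h2, h3⟩ := exists_removal h t (2 * |t - s| / (k + 1)) J s
      (by rintro rfl; simp at hJ) (by
        rw [hJ]
        push_cast
        rw [div_mul_cancel₀ _ hk.ne']
        linarith [chainDouble_add_le s J t, abs_nonneg (J.headD t - s)])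
    have h4 := ih J' (by omega) (h2.trans hV) x
    -- The empty chain from `s` to `s` is `μ s s = id`.
    have h5 := h3 s [] |t - s| (by simpa [chainVar] using hV) x
    simp only [chainComp, h.id_eq, id] at h5
    refine (edist_triangle _ _ _).trans ((add_le_add h4 h5).trans ?_)
    rw [← ENNReal.ofReal_add (by positivity) (by positivity)]
    refine ENNReal.ofReal_le_ofReal (le_of_eq ?_)
    rw [Finset.sum_range_succ, Real.div_rpow (by positivity) hk.le,
      Real.mul_rpow (by norm_num) hts, Real.rpow_neg hk.le]
    ring

lemma sum_le_zetaR {ε : ℝ} (hε : 0 < ε) (k : ℕ) :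
    ∑ j ∈ Finset.range k, ((j : ℝ) + 1) ^ (-(1 + ε)) ≤ zetaR (1 + ε) := by
  refine Summable.sum_le_tsum _ (fun j _ => by positivity) ?_
  have h1 := (Real.summable_nat_rpow (p := -(1 + ε))).2 (by linarith)
  simpa using (summable_nat_add_iff 1).2 h1

/-- The sewing estimate. -/
lemma edist_single_le (h : IsLocalApproxFlow μ ε n a b C f g) {K : ℝ}
    (hK : K = 2 ^ (1 + ε) * (∑ i, C i) * zetaR (1 + ε)) (s t : ℝ) (J : List ℝ)
    (hV : chainVar s J t ≤ |t - s|) (x : M t) :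
    edist (μ s t x) (chainComp μ s J t x) ≤
      ENNReal.ofReal (K * g |t - s| * |t - s| ^ (1 + ε)) := by
  refine (edist_single_le_sum h s t _ J rfl hV x).trans (ENNReal.ofReal_le_ofReal ?_)
  have hC : 0 ≤ ∑ i, C i := Finset.sum_nonneg fun i _ => (h.C_pos i).le
  have hg : 0 ≤ g |t - s| := zero_le_one.trans (h.g_ge_one _ (abs_nonneg (t - s)))
  have hz := sum_le_zetaR h.eps_pos J.length
  rw [hK]
  gcongr

/-- Comparison of a chain `l` with a monotone refinement `J`. As in `exists_removal`, a chain
`s₀, p, s` on the left makes the induction on `l` run. -/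
lemma edist_refine_le (h : IsLocalApproxFlow μ ε n a b C f g) {K : ℝ}
    (hK : K = 2 ^ (1 + ε) * (∑ i, C i) * zetaR (1 + ε)) {m : ℝ} (hm : 0 ≤ m) (s₀ t R : ℝ)
    (l : List ℝ) : ∀ (s : ℝ) (J p : List ℝ), l.Sublist J → chainVar s J t ≤ |t - s| →
      chainGap m s l t → chainVar s₀ p s + |t - s| ≤ R → ∀ x : M t,
      edist (chainComp μ s₀ p s (chainComp μ s l t x))
        (chainComp μ s₀ p s (chainComp μ s J t x)) ≤
      ENNReal.ofReal (g R * (K * (g m * m ^ ε)) * |t - s|) := by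
  have hC : 0 ≤ ∑ i, C i := Finset.sum_nonneg fun i _ => (h.C_pos i).le
  have hK0 : 0 ≤ K := by
    have := sum_le_zetaR h.eps_pos 0
    rw [Finset.sum_range_zero] at this
    rw [hK]
    positivity
  have hgm : 0 ≤ g m := zero_le_one.trans (h.g_ge_one m hm)
  -- Replacing a single step `μ s u` by a piece `J` of the refinement.
  have step : ∀ (s u : ℝ) (J p : List ℝ), chainVar s J u ≤ |u - s| → |u - s| ≤ m →
      chainVar s₀ p s + |u - s| ≤ R → ∀ x : M u,
      edist (chainComp μ s₀ p s (μ s u x)) (chainComp μ s₀ p s (chainComp μ s J u x)) ≤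
      ENNReal.ofReal (g R * (K * (g m * m ^ ε)) * |u - s|) := by
    intro s u J p hV hu hR x
    have hu0 := abs_nonneg (u - s)
    have hp0 := (abs_nonneg _).trans (abs_sub_le_chainVar s₀ p s)
    have hgR : 0 ≤ g R := zero_le_one.trans (h.g_ge_one R (Set.mem_Ici.2 (by linarith)))
    refine (lipWith_chainComp h s₀ p s R (by linarith) _ _).trans ?_
    rw [mul_assoc, ENNReal.ofReal_mul hgR]
    gcongr
    refine (edist_single_le h hK s u J hV x).trans (ENNReal.ofReal_le_ofReal ?_)
    have hgu : g |u - s| ≤ g m := h.g_mono hu0 hm hu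
    have he : |u - s| ^ ε ≤ m ^ ε := Real.rpow_le_rpow hu0 hu h.eps_pos.le
    rw [Real.rpow_add_of_nonneg hu0 zero_le_one h.eps_pos.le, Real.rpow_one]
    calc K * g |u - s| * (|u - s| * |u - s| ^ ε)
        ≤ K * g m * (|u - s| * m ^ ε) := by gcongr
      _ = K * (g m * m ^ ε) * |u - s| := by ring
  induction l with
  | nil =>
    intro s J p _ hV hgap hR x
    exact step s t J p hV hgap hR x
  | cons u l ih =>
    intro s J p hsub hV hgap hR x
    obtain ⟨r₁, r₂, rfl, hu, hl⟩ := List.cons_sublist_iff.1 hsub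
    obtain ⟨J₁, J₂, rfl⟩ := List.append_of_mem hu
    rw [List.append_assoc, List.cons_append] at hV ⊢
    rw [chainVar_append] at hV
    have h1 := abs_sub_le_chainVar s J₁ u
    have h2 := abs_sub_le_chainVar u (J₂ ++ r₂) t
    have h3 := abs_sub_le t u s
    have hp0 := (abs_nonneg _).trans (abs_sub_le_chainVar s₀ p s)
    have ht0 := abs_nonneg (t - s)
    have ht1 := abs_nonneg (t - u)
    have hgR : 0 ≤ g R := zero_le_one.trans (h.g_ge_one R (Set.mem_Ici.2 (by linarith)))
    have h4 := step s u J₁ p (by linarith) hgap.1 (by linarith) (chainComp μ u l t x)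
    have h5 := ih u (J₂ ++ r₂) (p ++ s :: J₁) (hl.trans (List.sublist_append_right _ _))
      (by linarith) hgap.2 (by rw [chainVar_append]; linarith) x
    rw [chainComp_append, chainComp_append] at h5
    rw [chainComp_append]
    refine (edist_triangle _ _ _).trans ((add_le_add h4 h5).trans ?_)
    rw [← ENNReal.ofReal_add (by positivity) (by positivity), ← mul_add,
      show |u - s| + |t - u| = |t - s| by linarith]

end Flow

/-- For a local approximate flow, with `K = 2^{1+ε} (Σ_i C_i) ζ(1+ε)`: for any pair
`(I, I')` of subdivisions of the interval between `s` and `t`,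
`d_{st}(μ^I_{st}, μ^{I'}_{st}) ≤
  K · g(|t−s|) · (g(mesh I) (mesh I)^ε + g(mesh I') (mesh I')^ε) · |t−s|`. -/
theorem stmt6 {M : ℝ → Type*} [∀ t, MetricSpace (M t)] [∀ t, CompleteSpace (M t)]
    (μ : ∀ s t : ℝ, M t → M s) (ε : ℝ) (n : ℕ) (a b C : Fin n → ℝ) (f g : ℝ → ℝ)
    (h : IsLocalApproxFlow μ ε n a b C f g)
    (K : ℝ) (hK : K = 2 ^ (1 + ε) * (∑ i, C i) * zetaR (1 + ε))
    (s t : ℝ) (I I' : Subdivision s t) :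
    unifDist (I.comp μ) (I'.comp μ) ≤
      ENNReal.ofReal (K * g |t - s| *
        (g I.mesh * I.mesh ^ ε + g I'.mesh * I'.mesh ^ ε) * |t - s|) := by
  obtain ⟨J, hJ, hJ', hV⟩ := I.exists_refinement I'
  have hC : 0 ≤ ∑ i, C i := Finset.sum_nonneg fun i _ => (h.C_pos i).le
  have hK0 : 0 ≤ K := by
    have := sum_le_zetaR h.eps_pos 0
    rw [Finset.sum_range_zero] at this
    rw [hK]
    positivity
  have hg : 0 ≤ g |t - s| := zero_le_one.trans (h.g_ge_one _ (abs_nonneg (t - s)))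
  have hcomp : ∀ I : Subdivision s t, I.interior.Sublist J → ∀ x : M t,
      edist (I.comp μ x) (chainComp μ s J t x) ≤
        ENNReal.ofReal (g |t - s| * (K * (g I.mesh * I.mesh ^ ε)) * |t - s|) := by
    intro I hI x
    have := edist_refine_le h hK I.mesh_nonneg s t |t - s| I.interior s J [] hI hV
      I.chainGap_mesh (by simp [chainVar]) x
    rw [I.comp_eq]
    simpa only [chainComp, h.id_eq, id] using this
  have hpos : ∀ I : Subdivision s t, 0 ≤ g I.mesh * I.mesh ^ ε := fun I =>
    mul_nonneg (zero_le_one.trans (h.g_ge_one _ I.mesh_nonneg))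
      (Real.rpow_nonneg I.mesh_nonneg _)
  have hI := hpos I
  have hI' := hpos I'
  refine iSup_le fun x => (edist_triangle_right _ _ (chainComp μ s J t x)).trans
    ((add_le_add (hcomp I hJ x) (hcomp I' hJ' x)).trans ?_)
  rw [← ENNReal.ofReal_add (by positivity) (by positivity)]
  exact ENNReal.ofReal_le_ofReal (le_of_eq (by ring))
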